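/- Failure of weak unique continuation from slab domains in two dimensions: Let s ∈ (0,1) and h > 0. Then there exist a sequence u = {u_j}_{j∈ℤ²} ∈ ℓ_s, not identically zero, and a bounded sequence V = {V_j}_{j∈ℤ²} such that (−Δ_d)^s u_j = V_j u_j for all j = (j_1,j_2) ∈ ℤ², while u_j = 0 for all j with j_1 ∈ {−1,0,1}. -/

import Mathlib

open scoped BigOperators
open MeasureTheory

/-- Modified Bessel function of the first kind of integer order `k`. -/
noncomputable def besselI (k : ℤ) (t : ℝ) : ℝ :=
  ∑' ℓ : ℕ, (t / 2) ^ (2 * ℓ + k.natAbs) /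
    ((Nat.factorial ℓ : ℝ) * Real.Gamma ((ℓ : ℝ) + (k.natAbs : ℝ) + 1))

/-- Semidiscrete heat kernel `G(m,t) = e^{-2dt} ∏ I_{m_i}(2t)` on `ℤ^d`. -/
noncomputable def heatG (d : ℕ) (m : Fin d → ℤ) (t : ℝ) : ℝ :=
  Real.exp (-(2 * (d : ℝ) * t)) * ∏ i, besselI (m i) (2 * t)

/-- The discrete kernel `K_s^h(m)`, with `K_s^h(0) = 0`. -/
noncomputable def Ksh (d : ℕ) (h s : ℝ) (m : Fin d → ℤ) : ℝ :=
  if m = 0 then 0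
  else h ^ (-(2 * s)) * |Real.Gamma (-s)|⁻¹ *
    ∫ t in Set.Ioi (0 : ℝ), heatG d m t / t ^ (1 + s)

/-- Membership in the space `ℓ_s`. -/
def memLs (d : ℕ) (s : ℝ) (u : (Fin d → ℤ) → ℝ) : Prop :=
  Summable fun m : Fin d → ℤ =>
    |u m| * (1 + Real.sqrt (∑ i, ((m i : ℝ)) ^ 2)) ^ (-((d : ℝ) + 2 * s))

/-- The fractional discrete Laplacian `(-Δ_d)^s u_j = ∑_{m} (u_j - u_m) K_s^h(j-m)`
(the `m = j` term vanishes since `K_s^h(0) = 0`). -/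
noncomputable def fracLap (d : ℕ) (h s : ℝ) (u : (Fin d → ℤ) → ℝ) (j : Fin d → ℤ) : ℝ :=
  ∑' m : Fin d → ℤ, (u j - u m) * Ksh d h s (j - m)

namespace SlabAux

def eqv : ℕ × ℕ ≃ ℤ × ℕ where
  toFun p := ((p.1 : ℤ) - p.2, min p.1 p.2)
  invFun q := (q.2 + q.1.toNat, q.2 + (-q.1).toNat)
  left_inv p := by ext <;> simp <;> omega
  right_inv q := by ext <;> simp <;> omega

noncomputable def bt (k : ℤ) (x : ℝ) (l : ℕ) : ℝ :=
  (x / 2) ^ (2 * l + k.natAbs) /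
    ((Nat.factorial l : ℝ) * Real.Gamma ((l : ℝ) + (k.natAbs : ℝ) + 1))

lemma bt_eq (k : ℤ) (x : ℝ) (l : ℕ) : bt k x l = (x / 2) ^ (2 * l + k.natAbs) /
    ((Nat.factorial l : ℝ) * (Nat.factorial (l + k.natAbs) : ℝ)) := by
  unfold bt
  rw [← Nat.cast_add, Real.Gamma_nat_eq_factorial]

lemma hasSum_bt (x : ℝ) : HasSum (fun q : ℤ × ℕ => bt q.1 x q.2) (Real.exp x) := by
  have h1 : HasSum (fun n : ℕ => (x / 2) ^ n / (n.factorial : ℝ)) (Real.exp (x / 2)) := by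
    rw [Real.exp_eq_exp_ℝ]
    exact NormedSpace.expSeries_div_hasSum_exp (x / 2)
  have hn : Summable (fun n : ℕ => ‖(x / 2) ^ n / (n.factorial : ℝ)‖) := h1.summable.norm
  have h2 : HasSum (fun p : ℕ × ℕ => ((x / 2) ^ p.1 / (p.1.factorial : ℝ)) *
      ((x / 2) ^ p.2 / (p.2.factorial : ℝ))) (Real.exp x) := by
    have := h1.mul h1 (summable_mul_of_summable_norm hn hn)
    rwa [← Real.exp_add, add_halves] at this
  rw [← eqv.hasSum_iff]
  convert h2 using 1
  funext p
  obtain ⟨a, b⟩ := p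
  simp only [Function.comp, eqv, Equiv.coe_fn_mk, bt_eq]
  rcases le_total a b with hab | hab
  · have e1 : ((a : ℤ) - b).natAbs = b - a := by omega
    rw [e1, min_eq_left hab, show a + (b - a) = b by omega,
      show 2 * a + (b - a) = a + b by omega, pow_add]
    field_simp
  · have e1 : ((a : ℤ) - b).natAbs = a - b := by omega
    rw [e1, min_eq_right hab, show b + (a - b) = a by omega,
      show 2 * b + (a - b) = a + b by omega, pow_add]
    field_simp

lemma hasSum_fiber (k : ℤ) (x : ℝ) : HasSum (bt k x) (besselI k x) :=
  ((hasSum_bt x).summable.prod_factor k).hasSum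

lemma hasSum_bessel (x : ℝ) : HasSum (fun k : ℤ => besselI k x) (Real.exp x) :=
  (hasSum_bt x).prod_fiberwise fun k => hasSum_fiber k x

lemma measurable_bessel (k : ℤ) : Measurable (besselI k) := by
  refine measurable_of_tendsto_metrizable (f := fun n x => ∑ l ∈ Finset.range n, bt k x l) ?_ ?_
  · intro n
    unfold bt
    fun_prop
  · rw [tendsto_pi_nhds]
    intro x
    exact (hasSum_fiber k x).tendsto_sum_nat

lemma bt_nonneg (k : ℤ) {x : ℝ} (hx : 0 ≤ x) (l : ℕ) : 0 ≤ bt k x l := by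
  rw [bt_eq]; positivity

lemma bessel_pos (k : ℤ) {x : ℝ} (hx : 0 < x) : 0 < besselI k x := by
  rw [← (hasSum_fiber k x).tsum_eq]
  refine (hasSum_fiber k x).summable.tsum_pos (fun l => bt_nonneg k hx.le l) 0 ?_
  rw [bt_eq]; positivity

lemma bessel_zero_ge {x : ℝ} (hx : 0 ≤ x) : 1 ≤ besselI 0 x := by
  have := le_hasSum (hasSum_fiber 0 x) 0 (fun l _ => bt_nonneg 0 hx l)
  simpa [bt_eq] using this

lemma bessel_congr {k k' : ℤ} (h : k.natAbs = k'.natAbs) (x : ℝ) : besselI k x = besselI k' x := by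
  simp only [besselI, h]

lemma bessel_lt {k k' : ℤ} (h : k'.natAbs = k.natAbs + 2) {x : ℝ} (hx : 0 < x) :
    besselI k' x < besselI k x := by
  have h1 := hasSum_fiber k x
  have h2 := hasSum_fiber k' x
  have h3 := (hasSum_nat_add_iff' 1).mpr h1
  have h4 : besselI k' x ≤ _ := hasSum_le (fun l => by
    rw [bt_eq, bt_eq, h]
    have e1 : 2 * (l + 1) + k.natAbs = 2 * l + (k.natAbs + 2) := by ring
    rw [e1]
    gcongr (x / 2) ^ _ / ?_
    set a := k.natAbs
    have e2 : (l + 1 + a).factorial = (l + a + 1).factorial := by congr 1; omega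
    have e3 : (l + (a + 2)).factorial = (l + a + 2) * (l + a + 1).factorial := by
      rw [← Nat.factorial_succ]; congr 1
    rw [e2, e3, Nat.factorial_succ l]
    have : (l + 1) * l.factorial * (l + a + 1).factorial ≤
        l.factorial * ((l + a + 2) * (l + a + 1).factorial) := by
      calc (l + 1) * l.factorial * (l + a + 1).factorial
          = (l + 1) * (l.factorial * (l + a + 1).factorial) := by ring
        _ ≤ (l + a + 2) * (l.factorial * (l + a + 1).factorial) :=
            Nat.mul_le_mul_right _ (by omega)
        _ = _ := by ring
    exact_mod_cast this) h2 h3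
  have h5 : 0 < bt k x 0 := by rw [bt_eq]; positivity
  simp only [Finset.range_one, Finset.sum_singleton] at h4
  linarith

lemma heat_eq (m : Fin 2 → ℤ) (t : ℝ) :
    heatG 2 m t = Real.exp (-(4 * t)) * (besselI (m 0) (2 * t) * besselI (m 1) (2 * t)) := by
  simp only [heatG, Fin.prod_univ_two]
  norm_num

lemma heat_hasSum (t : ℝ) (ht : 0 < t) : HasSum (fun m : Fin 2 → ℤ => heatG 2 m t) 1 := by
  have h := hasSum_bessel (2 * t)
  have hn : Summable (fun k : ℤ => ‖besselI k (2 * t)‖) := h.summable.norm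
  have h2 := (h.mul h (summable_mul_of_summable_norm hn hn)).mul_left (Real.exp (-(4 * t)))
  rw [← Real.exp_add, ← Real.exp_add, show -(4 * t) + (2 * t + 2 * t) = 0 by ring,
    Real.exp_zero] at h2
  rw [← (finTwoArrowEquiv ℤ).symm.hasSum_iff]
  have e : (fun m : Fin 2 → ℤ => heatG 2 m t) ∘ (finTwoArrowEquiv ℤ).symm =
      fun i : ℤ × ℤ => Real.exp (-(4 * t)) * (besselI i.1 (2 * t) * besselI i.2 (2 * t)) := by
    funext p
    simp [heat_eq, finTwoArrowEquiv]
  rw [e]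
  exact h2

lemma heat_pos (m : Fin 2 → ℤ) {t : ℝ} (ht : 0 < t) : 0 < heatG 2 m t := by
  rw [heat_eq]
  have := bessel_pos (m 0) (x := 2 * t) (by linarith)
  have := bessel_pos (m 1) (x := 2 * t) (by linarith)
  positivity

lemma heat_sum_le (F : Finset (Fin 2 → ℤ)) (hF : 0 ∉ F) {t : ℝ} (ht : 0 < t) :
    ∑ m ∈ F, heatG 2 m t ≤ 4 * t ∧ ∑ m ∈ F, heatG 2 m t ≤ 1 := by
  have h := sum_le_hasSum (insert 0 F) (fun m _ => (heat_pos m ht).le) (heat_hasSum t ht)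
  rw [Finset.sum_insert hF] at h
  have h0 : Real.exp (-(4 * t)) ≤ heatG 2 0 t := by
    rw [heat_eq]
    have h1 := bessel_zero_ge (x := 2 * t) (by linarith)
    have h2 : 1 ≤ besselI 0 (2 * t) * besselI 0 (2 * t) := one_le_mul_of_one_le_of_one_le h1 h1
    simpa using le_mul_of_one_le_right (Real.exp_pos (-(4 * t))).le h2
  have h3 := Real.add_one_le_exp (-(4 * t))
  have h4 := Real.exp_pos (-(4 * t))
  constructor <;> linarith

noncomputable def phi (s t : ℝ) : ℝ := if t ≤ 1 then 4 * t ^ (-s) else t ^ (-(1 + s))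

lemma phi_int {s : ℝ} (hs : s ∈ Set.Ioo (0 : ℝ) 1) : IntegrableOn (phi s) (Set.Ioi 0) := by
  rw [← Set.Ioc_union_Ioi_eq_Ioi (zero_le_one (α := ℝ))]
  refine IntegrableOn.union ?_ ?_
  · have h1 : IntegrableOn (fun t : ℝ => 4 * t ^ (-s)) (Set.Ioc 0 1) := by
      have := intervalIntegral.intervalIntegrable_rpow' (a := 0) (b := 1) (r := -s)
        (by linarith [hs.2])
      rw [intervalIntegrable_iff_integrableOn_Ioc_of_le zero_le_one] at this
      exact this.const_mul 4
    refine h1.congr_fun (fun t ht => ?_) measurableSet_Ioc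
    simp [phi, ht.2]
  · have h1 : IntegrableOn (fun t : ℝ => t ^ (-(1 + s))) (Set.Ioi 1) :=
      integrableOn_Ioi_rpow_of_lt (by linarith [hs.1]) one_pos
    refine h1.congr_fun (fun t ht => ?_) measurableSet_Ioi
    have : ¬ t ≤ 1 := not_le.mpr ht
    simp [phi, this]

lemma sum_le_phi {s : ℝ} (F : Finset (Fin 2 → ℤ)) (hF : 0 ∉ F) {t : ℝ} (ht : 0 < t) :
    ∑ m ∈ F, heatG 2 m t / t ^ (1 + s) ≤ phi s t := by
  rw [← Finset.sum_div]
  have hp : 0 < t ^ (1 + s) := Real.rpow_pos_of_pos ht _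
  obtain ⟨h1, h2⟩ := heat_sum_le F hF ht
  rw [div_le_iff₀ hp]
  unfold phi
  split_ifs with hc
  · rw [mul_assoc, ← Real.rpow_add ht]
    simpa using h1
  · rw [← Real.rpow_add ht]
    simpa using h2

lemma g_int {s : ℝ} (hs : s ∈ Set.Ioo (0 : ℝ) 1) {m : Fin 2 → ℤ} (hm : m ≠ 0) :
    IntegrableOn (fun t => heatG 2 m t / t ^ (1 + s)) (Set.Ioi 0) := by
  refine Integrable.mono' (phi_int hs) ?_ ?_
  · have h0 := measurable_bessel (m 0)
    have h1 := measurable_bessel (m 1)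
    simp only [heat_eq]
    apply Measurable.aestronglyMeasurable
    fun_prop
  · refine (ae_restrict_iff' measurableSet_Ioi).mpr (Filter.Eventually.of_forall fun t ht => ?_)
    have ht : 0 < t := ht
    rw [Real.norm_of_nonneg (div_nonneg (heat_pos m ht).le (Real.rpow_nonneg ht.le _))]
    simpa using sum_le_phi (s := s) {m} (by simpa using hm.symm) ht

lemma coef_pos {h s : ℝ} (hh : 0 < h) (hs : s ∈ Set.Ioo (0 : ℝ) 1) :
    0 < h ^ (-(2 * s)) * |Real.Gamma (-s)|⁻¹ := by
  have : Real.Gamma (-s) ≠ 0 := by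
    apply Real.Gamma_ne_zero
    intro n hn
    have hn' : s = n := by linarith
    have h1 := hs.1
    have h2 := hs.2
    rw [hn'] at h1 h2
    norm_cast at h1 h2
    omega
  have := abs_pos.mpr this
  positivity

lemma K_nonneg {h s : ℝ} (hh : 0 < h) (hs : s ∈ Set.Ioo (0 : ℝ) 1) (m : Fin 2 → ℤ) :
    0 ≤ Ksh 2 h s m := by
  unfold Ksh
  split_ifs
  · rfl
  · refine mul_nonneg (coef_pos hh hs).le (setIntegral_nonneg measurableSet_Ioi fun t ht => ?_)
    exact div_nonneg (heat_pos m ht).le (Real.rpow_nonneg (le_of_lt ht) _)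

lemma K_summable {h s : ℝ} (hh : 0 < h) (hs : s ∈ Set.Ioo (0 : ℝ) 1) :
    Summable (Ksh 2 h s) := by
  refine summable_of_sum_le (c := h ^ (-(2 * s)) * |Real.Gamma (-s)|⁻¹ *
    ∫ t in Set.Ioi (0 : ℝ), phi s t) (K_nonneg hh hs) fun F => ?_
  have e1 : ∑ m ∈ F, Ksh 2 h s m = ∑ m ∈ F.erase 0, Ksh 2 h s m := by
    symm
    apply Finset.sum_erase
    simp [Ksh]
  have e2 : ∑ m ∈ F.erase 0, Ksh 2 h s m = ∑ m ∈ F.erase 0, h ^ (-(2 * s)) *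
      |Real.Gamma (-s)|⁻¹ * ∫ t in Set.Ioi (0 : ℝ), heatG 2 m t / t ^ (1 + s) := by
    refine Finset.sum_congr rfl fun m hm => ?_
    simp [Ksh, (Finset.mem_erase.mp hm).1]
  have hi : ∀ m ∈ F.erase 0,
      IntegrableOn (fun t => heatG 2 m t / t ^ (1 + s)) (Set.Ioi 0) :=
    fun m hm => g_int hs (Finset.mem_erase.mp hm).1
  rw [e1, e2, ← Finset.mul_sum, ← integral_finsetSum _ hi]
  refine mul_le_mul_of_nonneg_left ?_ (coef_pos hh hs).le
  refine setIntegral_mono_on (integrable_finsetSum _ hi) (phi_int hs) measurableSet_Ioi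
    fun t ht => sum_le_phi _ (by simp) ht

lemma K_congr {h s : ℝ} {m m' : Fin 2 → ℤ} (h0 : (m 0).natAbs = (m' 0).natAbs)
    (h1 : (m 1).natAbs = (m' 1).natAbs) : Ksh 2 h s m = Ksh 2 h s m' := by
  have e : m = 0 ↔ m' = 0 := by
    simp only [funext_iff, Fin.forall_fin_two, Pi.zero_apply]
    omega
  simp only [Ksh, heat_eq, bessel_congr h0, bessel_congr h1, e]

lemma K_lt {h s : ℝ} (hh : 0 < h) (hs : s ∈ Set.Ioo (0 : ℝ) 1) {m m' : Fin 2 → ℤ}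
    (hm : m ≠ 0) (h0 : (m' 0).natAbs = (m 0).natAbs + 2)
    (h1 : (m' 1).natAbs = (m 1).natAbs) : Ksh 2 h s m' < Ksh 2 h s m := by
  have hm' : m' ≠ 0 := by
    rintro rfl
    simp at h0
  simp only [Ksh, hm, hm', if_false]
  refine mul_lt_mul_of_pos_left ?_ (coef_pos hh hs)
  rw [← sub_pos, ← integral_sub (g_int hs hm) (g_int hs hm')]
  have hpos : ∀ t ∈ Set.Ioi (0 : ℝ),
      0 < heatG 2 m t / t ^ (1 + s) - heatG 2 m' t / t ^ (1 + s) := by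
    intro t ht
    have ht : 0 < t := ht
    rw [← sub_div]
    refine div_pos ?_ (Real.rpow_pos_of_pos ht _)
    rw [heat_eq, heat_eq, bessel_congr h1, sub_pos]
    have h2t : 0 < 2 * t := by linarith
    exact mul_lt_mul_of_pos_left (mul_lt_mul_of_pos_right (bessel_lt h0 h2t)
      (bessel_pos _ h2t)) (Real.exp_pos _)
  rw [setIntegral_pos_iff_support_of_nonneg_ae]
  · have : Function.support (fun t => heatG 2 m t / t ^ (1 + s) - heatG 2 m' t / t ^ (1 + s)) ∩
        Set.Ioi 0 = Set.Ioi 0 :=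
      Set.inter_eq_right.mpr fun t ht => (hpos t ht).ne'
    rw [this]
    simp
  · exact (ae_restrict_iff' measurableSet_Ioi).mpr
      (Filter.Eventually.of_forall fun t ht => (hpos t ht).le)
  · exact (g_int hs hm).sub (g_int hs hm')

def sig : (Fin 2 → ℤ) ≃ (Fin 2 → ℤ) where
  toFun m := ![-(m 0), m 1]
  invFun m := ![-(m 0), m 1]
  left_inv m := by ext i; fin_cases i <;> simp
  right_inv m := by ext i; fin_cases i <;> simp

@[simp] lemma sig0 (m : Fin 2 → ℤ) : sig m 0 = -(m 0) := rfl
@[simp] lemma sig1 (m : Fin 2 → ℤ) : sig m 1 = m 1 := rfl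

lemma K_shift {h s : ℝ} (hh : 0 < h) (hs : s ∈ Set.Ioo (0 : ℝ) 1) (j : Fin 2 → ℤ) :
    HasSum (fun m => Ksh 2 h s (j - m)) (∑' m, Ksh 2 h s m) := by
  have h1 := (Equiv.hasSum_iff (f := Ksh 2 h s) (Equiv.subLeft j)).mpr (K_summable hh hs).hasSum
  have e : Ksh 2 h s ∘ (Equiv.subLeft j) = fun m => Ksh 2 h s (j - m) := by
    funext m
    rw [Function.comp_apply, Equiv.subLeft_apply]
  rwa [e] at h1

lemma conv_summable {h s : ℝ} (hh : 0 < h) (hs : s ∈ Set.Ioo (0 : ℝ) 1)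
    {v : (Fin 2 → ℤ) → ℝ} {C : ℝ} (hv : ∀ m, |v m| ≤ C) (j : Fin 2 → ℤ) :
    Summable fun m => v m * Ksh 2 h s (j - m) := by
  have h1 := (K_shift hh hs j).summable
  refine Summable.of_norm_bounded (h1.mul_left C) fun m => ?_
  rw [norm_mul, Real.norm_eq_abs, Real.norm_of_nonneg (K_nonneg hh hs _)]
  exact mul_le_mul_of_nonneg_right (hv m) (K_nonneg hh hs _)

/-- The convolution at the point `(1,0)` with an odd function of the first variable. -/
noncomputable def B (h s : ℝ) (f : ℤ → ℝ) : ℝ :=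
  ∑' m : Fin 2 → ℤ, f (m 0) * Ksh 2 h s (![1, 0] - m)

lemma alg1 {a x y : ℝ} (ha : 0 ≤ a) (h : y ≤ x) : 0 ≤ a * x + -a * y := by nlinarith
lemma alg2 {a x y : ℝ} (ha : 0 ≤ -a) (h : x ≤ y) : 0 ≤ a * x + -a * y := by nlinarith
lemma alg3 {a x y : ℝ} (ha : 0 < a) (h : y < x) : 0 < a * x + -a * y := by nlinarith

lemma pos_aux {f : ℤ → ℝ} {F : (Fin 2 → ℤ) → ℝ} (hodd : ∀ n, f (-n) = -f n) (h1 : f 1 = 0)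
    (hnn : ∀ n, 2 ≤ n → 0 ≤ f n) {p : ℤ} (hp2 : 2 ≤ p) (hp : 0 < f p)
    (hS : Summable fun m : Fin 2 → ℤ => f (m 0) * F m)
    (key : ∀ m : Fin 2 → ℤ, 2 ≤ m 0 → F (sig m) < F m) :
    0 < ∑' m : Fin 2 → ℤ, f (m 0) * F m := by
  have h0 : f 0 = 0 := by have := hodd 0; simp at this; linarith
  have hm1 : f (-1) = 0 := by rw [hodd, h1, neg_zero]
  have hS' : Summable fun m : Fin 2 → ℤ => f (sig m 0) * F (sig m) :=
    sig.summable_iff.mpr hS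
  have e : ∑' m : Fin 2 → ℤ, f (sig m 0) * F (sig m) = ∑' m : Fin 2 → ℤ, f (m 0) * F m :=
    sig.tsum_eq (fun m : Fin 2 → ℤ => f (m 0) * F m)
  have e2 := hS.tsum_add hS'
  rw [e] at e2
  have key' : ∀ m : Fin 2 → ℤ, m 0 ≤ -2 → F m < F (sig m) := by
    intro m hm
    have := key (sig m) (by simp; omega)
    have e : sig (sig m) = m := sig.left_inv m
    rwa [e] at this
  have h3 : 0 < ∑' m : Fin 2 → ℤ, (f (m 0) * F m + f (sig m 0) * F (sig m)) := by
    refine (hS.add hS').tsum_pos (fun m => ?_) ![p, 0] ?_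
    · rw [sig0, hodd]
      rcases le_or_gt 2 (m 0) with h2 | h2
      · exact alg1 (hnn _ h2) (key m h2).le
      rcases le_or_gt (m 0) (-2) with h3 | h3
      · have := hnn (-(m 0)) (by omega)
        rw [hodd] at this
        exact alg2 this (key' m h3).le
      · have : m 0 = -1 ∨ m 0 = 0 ∨ m 0 = 1 := by omega
        rcases this with h | h | h <;> simp [h, h0, h1, hm1]
    · have := key ![p, 0] hp2
      rw [sig0, hodd]
      exact alg3 hp this
  linarith

lemma B_pos {h s : ℝ} (hh : 0 < h) (hs : s ∈ Set.Ioo (0 : ℝ) 1) {f : ℤ → ℝ}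
    (hb : ∀ n, |f n| ≤ 1) (hodd : ∀ n, f (-n) = -f n) (h1 : f 1 = 0)
    (hnn : ∀ n, 2 ≤ n → 0 ≤ f n) {p : ℤ} (hp2 : 2 ≤ p) (hp : 0 < f p) : 0 < B h s f := by
  have hS := conv_summable hh hs (v := fun m => f (m 0)) (fun m => hb _) ![1, 0]
  refine pos_aux (F := fun m => Ksh 2 h s (![1, 0] - m)) hodd h1 hnn hp2 hp hS ?_
  intro m hm
  have hne : ![1, 0] - m ≠ 0 := by
    intro h
    have := congrFun h 0
    simp only [Pi.sub_apply, Matrix.cons_val_zero, Pi.zero_apply] at this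
    omega
  have hA : ((![1, 0] - sig m : Fin 2 → ℤ) 0).natAbs = ((![1, 0] - m : Fin 2 → ℤ) 0).natAbs + 2 := by
    simp only [Pi.sub_apply, Matrix.cons_val_zero, sig0]
    omega
  have hB : ((![1, 0] - sig m : Fin 2 → ℤ) 1).natAbs = ((![1, 0] - m : Fin 2 → ℤ) 1).natAbs := by
    simp only [Pi.sub_apply, sig1]
  exact K_lt hh hs hne hA hB

/-- Vanishing of the convolution on the slab. -/
lemma conv_zero {h s : ℝ} {f : ℤ → ℝ} (hodd : ∀ n, f (-n) = -f n) (hB : B h s f = 0)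
    (j : Fin 2 → ℤ) (hj : j 0 = -1 ∨ j 0 = 0 ∨ j 0 = 1) :
    ∑' m : Fin 2 → ℤ, f (m 0) * Ksh 2 h s (j - m) = 0 := by
  have refl : ∀ j : Fin 2 → ℤ, ∑' m : Fin 2 → ℤ, f (m 0) * Ksh 2 h s (j - m) =
      - ∑' m : Fin 2 → ℤ, f (m 0) * Ksh 2 h s (sig j - m) := by
    intro j
    rw [← sig.tsum_eq (fun m : Fin 2 → ℤ => f (m 0) * Ksh 2 h s (j - m)), ← tsum_neg]
    refine tsum_congr fun m => ?_
    rw [sig0, hodd, K_congr (m := j - sig m) (m' := sig j - m)]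
    · ring
    · simp; omega
    · simp
  have one : ∀ j : Fin 2 → ℤ, j 0 = 1 → ∑' m : Fin 2 → ℤ, f (m 0) * Ksh 2 h s (j - m) = 0 := by
    intro j hj
    rw [← hB, B, ← (Equiv.addRight ![0, j 1]).tsum_eq
      (fun m : Fin 2 → ℤ => f (m 0) * Ksh 2 h s (j - m))]
    refine tsum_congr fun m => ?_
    rw [K_congr (m := j - (Equiv.addRight ![0, j 1]) m) (m' := ![1, 0] - m)]
    · simp
    · simp [hj, Matrix.vecHead]
    · simp [Matrix.vecHead, Matrix.vecTail]
  rcases hj with hj | hj | hj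
  · rw [refl, one (sig j) (by simp [hj]), neg_zero]
  · have e : sig j = j := by
      ext i; fin_cases i <;> simp [hj]
    have := refl j
    rw [e] at this
    linarith
  · exact one j hj

lemma memLs_bdd {s : ℝ} (hs : s ∈ Set.Ioo (0 : ℝ) 1) {u : (Fin 2 → ℤ) → ℝ} {C : ℝ}
    (hu : ∀ m, |u m| ≤ C) : memLs 2 s u := by
  have h1 := (EisensteinSeries.summable_one_div_norm_rpow (k := 2 + 2 * s)
    (by linarith [hs.1])).mul_left C
  refine Summable.of_norm_bounded_eventually h1 ?_
  have : ({0} : Set (Fin 2 → ℤ)).Finite := Set.finite_singleton _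
  filter_upwards [this.compl_mem_cofinite] with m hm
  have hm : m ≠ 0 := hm
  have hpos : 0 < ‖m‖ := norm_pos_iff.mpr hm
  have hle : ‖m‖ ≤ 1 + Real.sqrt (∑ i, ((m i : ℝ)) ^ 2) := by
    have : ‖m‖ ≤ Real.sqrt (∑ i, ((m i : ℝ)) ^ 2) := by
      rw [pi_norm_le_iff_of_nonneg (Real.sqrt_nonneg _)]
      intro i
      apply Real.le_sqrt_of_sq_le
      rw [Int.norm_eq_abs, sq_abs]
      exact Finset.single_le_sum (f := fun i => ((m i : ℝ)) ^ 2)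
        (fun i _ => sq_nonneg _) (Finset.mem_univ i)
    linarith
  have hb : 0 ≤ 1 + Real.sqrt (∑ i, ((m i : ℝ)) ^ 2) := by positivity
  rw [norm_mul, Real.norm_eq_abs, abs_abs, Real.norm_of_nonneg (Real.rpow_nonneg hb _)]
  refine mul_le_mul (hu m) ?_ (Real.rpow_nonneg hb _) ((abs_nonneg _).trans (hu m))
  push_cast
  exact Real.rpow_le_rpow_of_nonpos hpos hle (by linarith [hs.1])

noncomputable def f0 (n : ℤ) : ℝ := if 3 ≤ n then 1 else if n ≤ -3 then -1 else 0
noncomputable def f1 (n : ℤ) : ℝ := if n = 2 then 1 else if n = -2 then -1 else 0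

lemma f0_odd (n : ℤ) : f0 (-n) = - f0 n := by
  unfold f0; split_ifs <;> first | omega | norm_num
lemma f1_odd (n : ℤ) : f1 (-n) = - f1 n := by
  unfold f1; split_ifs <;> first | omega | norm_num
lemma f0_bd (n : ℤ) : |f0 n| ≤ 1 := by
  unfold f0; split_ifs <;> norm_num
lemma f1_bd (n : ℤ) : |f1 n| ≤ 1 := by
  unfold f1; split_ifs <;> norm_num

end SlabAux

open SlabAux in
/-- Failure of weak unique continuation from slab domains in two dimensions:
there are a nontrivial `u ∈ ℓ_s` and a bounded potential `V` with
`(-Δ_d)^s u = V u` on all of `ℤ²` and `u = 0` on the slab `{j : j₁ ∈ {-1,0,1}}`. -/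
theorem slab_failure_WUCP (h s : ℝ) (hh : 0 < h) (hs : s ∈ Set.Ioo (0 : ℝ) 1) :
    ∃ u V : (Fin 2 → ℤ) → ℝ, u ≠ 0 ∧ memLs 2 s u ∧ (∃ C : ℝ, ∀ j, |V j| ≤ C) ∧
      (∀ j : Fin 2 → ℤ, fracLap 2 h s u j = V j * u j) ∧
      (∀ j : Fin 2 → ℤ, (j 0 = -1 ∨ j 0 = 0 ∨ j 0 = 1) → u j = 0) := by
  have hB0 : 0 < B h s f0 := B_pos hh hs f0_bd f0_odd (by norm_num [f0])
    (fun n _ => by unfold f0; split_ifs <;> first | omega | norm_num) (p := 3) (by norm_num)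
    (by norm_num [f0])
  have hB1 : 0 < B h s f1 := B_pos hh hs f1_bd f1_odd (by norm_num [f1])
    (fun n _ => by unfold f1; split_ifs <;> first | omega | norm_num) (p := 2) (by norm_num)
    (by norm_num [f1])
  set b0 := B h s f0 with hb0
  set b1 := B h s f1 with hb1
  let f : ℤ → ℝ := fun n => b1 * f0 n - b0 * f1 n
  have hodd : ∀ n, f (-n) = - f n := fun n => by simp only [f, f0_odd, f1_odd]; ring
  have hBf : B h s f = 0 := by
    have s0 := conv_summable hh hs (v := fun m => f0 (m 0)) (fun m => f0_bd _) ![1, 0]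
    have s1 := conv_summable hh hs (v := fun m => f1 (m 0)) (fun m => f1_bd _) ![1, 0]
    have : B h s f = b1 * b0 - b0 * b1 := by
      rw [hb0, hb1, B, B, B, ← tsum_mul_left, ← tsum_mul_left,
        ← (s0.mul_left _).tsum_sub (s1.mul_left _)]
      refine tsum_congr fun m => ?_
      simp only [f, hb0, hb1, B]
      ring
    rw [this]; ring
  have hfz : ∀ n : ℤ, (n = -1 ∨ n = 0 ∨ n = 1) → f n = 0 := by
    rintro n (rfl | rfl | rfl) <;> norm_num [f, f0, f1]
  have hfb : ∀ n, |f n| ≤ b0 + b1 := by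
    intro n
    simp only [f, f0, f1]
    rw [abs_le]
    split_ifs <;> first | omega | (constructor <;> linarith)
  have hfl : ∀ n : ℤ, ¬ (n = -1 ∨ n = 0 ∨ n = 1) → min b0 b1 ≤ |f n| := by
    intro n hn
    have h1 := min_le_left b0 b1
    have h2 := min_le_right b0 b1
    simp only [f, f0, f1]
    rw [le_abs]
    split_ifs <;> first | omega | (left; linarith) | (right; linarith)
  have hmin : 0 < min b0 b1 := lt_min hB0 hB1
  let u : (Fin 2 → ℤ) → ℝ := fun m => f (m 0)
  have hub : ∀ m, |u m| ≤ b0 + b1 := fun m => hfb _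
  have hdiff : ∀ j m : Fin 2 → ℤ, |u j - u m| ≤ 2 * (b0 + b1) := fun j m => by
    have := abs_sub (u j) (u m)
    linarith [hub j, hub m]
  have hL : ∀ j, |fracLap 2 h s u j| ≤ 2 * (b0 + b1) * ∑' m, Ksh 2 h s m := by
    intro j
    rw [← Real.norm_eq_abs]
    refine tsum_of_norm_bounded ((K_shift hh hs j).mul_left _) fun m => ?_
    rw [norm_mul, Real.norm_eq_abs, Real.norm_of_nonneg (K_nonneg hh hs _)]
    exact mul_le_mul_of_nonneg_right (hdiff j m) (K_nonneg hh hs _)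
  have hLz : ∀ j : Fin 2 → ℤ, (j 0 = -1 ∨ j 0 = 0 ∨ j 0 = 1) → fracLap 2 h s u j = 0 := by
    intro j hj
    have hz := conv_zero hodd hBf j hj
    have : fracLap 2 h s u j = - ∑' m : Fin 2 → ℤ, f (m 0) * Ksh 2 h s (j - m) := by
      rw [← tsum_neg]
      refine tsum_congr fun m => ?_
      simp only [u, hfz _ hj]
      ring
    rw [this, hz, neg_zero]
  refine ⟨u, fun j => fracLap 2 h s u j / u j, ?_, memLs_bdd hs hub,
    ⟨2 * (b0 + b1) * (∑' m, Ksh 2 h s m) / min b0 b1, fun j => ?_⟩, fun j => ?_,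
    fun j hj => hfz _ hj⟩
  · intro h0
    have := hfl 2 (by norm_num)
    have h2 : f 2 = 0 := congrFun h0 ![2, 0]
    rw [h2, abs_zero] at this
    linarith
  · have hnn : 0 ≤ 2 * (b0 + b1) * ∑' m, Ksh 2 h s m := (abs_nonneg _).trans (hL j)
    by_cases hj : j 0 = -1 ∨ j 0 = 0 ∨ j 0 = 1
    · simp only [hLz j hj, zero_div, abs_zero]
      positivity
    · rw [abs_div]
      exact div_le_div₀ hnn (hL j) hmin (hfl _ hj)
  · by_cases hj : j 0 = -1 ∨ j 0 = 0 ∨ j 0 = 1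
    · rw [hLz j hj, show u j = 0 from hfz _ hj]; simp
    · have : u j ≠ 0 := by
        intro h0
        have := hfl _ hj
        rw [show f (j 0) = 0 from h0, abs_zero] at this
        linarith
      rw [div_mul_cancel₀ _ this]
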